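/- Let ℓ_{k,i} (k = 1,…,m; i = 1,2,…) be real numbers, let ρ_1,…,ρ_m > 0 and a, b ≥ 0. Define: τ(a,b) = inf{n ≥ 1 : Σ_{i=1}^n Σ_{k=1}^m ℓ_{k,i} ≥ a and Σ_{i=1}^n ℓ_{k,i} ≥ ρ_k b for all 1 ≤ k ≤ m}; M_k = inf{n ≥ 1 : Σ_{i=1}^n ℓ_{k,i} ≥ ρ_k b}; τ_k = sup{n ≥ 1 : Σ_{i=M_k+1}^{M_k+n} ℓ_{k,i} ≤ 0} (set τ_k = 0 if the set is empty); M̂ = max_{1≤k≤m}(M_k + τ_k + 1); and t(M̂) = inf{n ≥ 1 : Σ_{i=M̂+1}^{M̂+n} Σ_{k=1}^m ℓ_{k,i} ≥ a − (Σ_{k=1}^m ρ_k) b}. If M_k and τ_k are finite for all k and t(M̂) is finite, then τ(a,b) ≤ M̂ + t(M̂), and consequently τ(a,b) ≤ Σ_{k=1}^m τ_k + 1 + t(M̂) + max_{1≤k≤m} M_k. -/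

import Mathlib

/-- deterministic pathwise bound for the one-sided SPRT-type stopping time:
with increments `ℓ k i` (stream `k = 1,…,m`, time `i = 1,2,…`), weights `ρ k > 0` and levels
`a, b ≥ 0`, define `τ(a,b)` as the first `n ≥ 1` at which the combined partial sum reaches `a`
while each stream's partial sum reaches `ρ k * b`; `M k` as the first `n ≥ 1` at which stream
`k`'s partial sum reaches `ρ k * b`; `τ k` as the last `n ≥ 1` with
`∑_{i = M k + 1}^{M k + n} ℓ k i ≤ 0` (`0` if there is none); `M̂ = max_k (M k + τ k + 1)`;
and `t(M̂)` as the first `n ≥ 1` with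
`∑_{i = M̂ + 1}^{M̂ + n} ∑ₖ ℓ k i ≥ a - (∑ₖ ρ k) b`. If every `M k` and `τ k` is finite and
`t(M̂)` is finite, then `τ(a,b) ≤ M̂ + t(M̂)`, and consequently
`τ(a,b) ≤ ∑ₖ τ k + 1 + t(M̂) + max_k M k`. -/
theorem sprt_pathwise_bound (m : ℕ) (hm : 1 ≤ m) (ℓ : Fin m → ℕ → ℝ)
    (ρ : Fin m → ℝ) (hρ : ∀ k, 0 < ρ k) (a b : ℝ) (ha : 0 ≤ a) (hb : 0 ≤ b)
    (M : Fin m → ℕ)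
    (hM : ∀ k, M k = sInf {n : ℕ | 1 ≤ n ∧ ρ k * b ≤ ∑ i ∈ Finset.Icc 1 n, ℓ k i})
    (hMfin : ∀ k, {n : ℕ | 1 ≤ n ∧ ρ k * b ≤ ∑ i ∈ Finset.Icc 1 n, ℓ k i}.Nonempty)
    (τ : Fin m → ℕ)
    (hτ : ∀ k, τ k = sSup {n : ℕ | 1 ≤ n ∧ ∑ i ∈ Finset.Ioc (M k) (M k + n), ℓ k i ≤ 0})
    (hτfin : ∀ k, BddAbove {n : ℕ | 1 ≤ n ∧ ∑ i ∈ Finset.Ioc (M k) (M k + n), ℓ k i ≤ 0})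
    (Mhat : ℕ) (hMhat : Mhat = Finset.univ.sup fun k => M k + τ k + 1)
    (t : ℕ)
    (ht : t = sInf {n : ℕ | 1 ≤ n ∧
      a - (∑ k, ρ k) * b ≤ ∑ i ∈ Finset.Ioc Mhat (Mhat + n), ∑ k, ℓ k i})
    (htfin : {n : ℕ | 1 ≤ n ∧
      a - (∑ k, ρ k) * b ≤ ∑ i ∈ Finset.Ioc Mhat (Mhat + n), ∑ k, ℓ k i}.Nonempty) :
    (⨅ (n : ℕ) (_ : 1 ≤ n ∧ (a ≤ ∑ i ∈ Finset.Icc 1 n, ∑ k, ℓ k i) ∧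
        ∀ k, ρ k * b ≤ ∑ i ∈ Finset.Icc 1 n, ℓ k i), (n : ℕ∞)) ≤ ((Mhat + t : ℕ) : ℕ∞) ∧
      (⨅ (n : ℕ) (_ : 1 ≤ n ∧ (a ≤ ∑ i ∈ Finset.Icc 1 n, ∑ k, ℓ k i) ∧
        ∀ k, ρ k * b ≤ ∑ i ∈ Finset.Icc 1 n, ℓ k i), (n : ℕ∞)) ≤
        (((∑ k, τ k) + 1 + t + Finset.univ.sup M : ℕ) : ℕ∞) := by
  have split : ∀ (f : ℕ → ℝ) (p q : ℕ), p ≤ q →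
      ∑ i ∈ Finset.Icc 1 q, f i = ∑ i ∈ Finset.Icc 1 p, f i + ∑ i ∈ Finset.Ioc p q, f i := by
    intro f p q hpq
    rw [← Finset.sum_union]
    · congr 1
      ext x
      simp only [Finset.mem_Icc, Finset.mem_union, Finset.mem_Ioc]
      omega
    · rw [Finset.disjoint_left]
      intro x
      simp only [Finset.mem_Icc, Finset.mem_Ioc]
      omega
  have hkey : ∀ k n, M k + τ k + 1 ≤ n → ρ k * b ≤ ∑ i ∈ Finset.Icc 1 n, ℓ k i := by
    intro k n hn
    have h1 := Nat.sInf_mem (hMfin k)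
    rw [← hM k] at h1
    have h2 : 0 < ∑ i ∈ Finset.Ioc (M k) n, ℓ k i := by
      by_contra hneg
      obtain ⟨d, rfl⟩ : ∃ d, n = M k + d := ⟨n - M k, by omega⟩
      have h3 : d ≤ τ k := by
        rw [hτ k]
        exact le_csSup (hτfin k) ⟨by omega, not_lt.mp hneg⟩
      omega
    rw [split _ (M k) n (by omega)]
    linarith [h1.2]
  have hle : ∀ k, M k + τ k + 1 ≤ Mhat := by
    intro k
    rw [hMhat]
    exact Finset.le_sup (f := fun k => M k + τ k + 1) (Finset.mem_univ k)
  have h4 := Nat.sInf_mem htfin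
  rw [← ht] at h4
  have hmain : (⨅ (n : ℕ) (_ : 1 ≤ n ∧ (a ≤ ∑ i ∈ Finset.Icc 1 n, ∑ k, ℓ k i) ∧
        ∀ k, ρ k * b ≤ ∑ i ∈ Finset.Icc 1 n, ℓ k i), (n : ℕ∞)) ≤ ((Mhat + t : ℕ) : ℕ∞) := by
    refine iInf₂_le (Mhat + t) ⟨le_trans h4.1 (Nat.le_add_left _ _), ?_, ?_⟩
    · rw [split _ Mhat (Mhat + t) (by omega)]
      have h5 : (∑ k, ρ k) * b ≤ ∑ i ∈ Finset.Icc 1 Mhat, ∑ k, ℓ k i := by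
        rw [Finset.sum_comm, Finset.sum_mul]
        exact Finset.sum_le_sum fun k _ => hkey k Mhat (hle k)
      linarith [h4.2]
    · intro k
      exact hkey k _ (le_trans (hle k) (Nat.le_add_right _ _))
  refine ⟨hmain, hmain.trans ?_⟩
  have h6 : Mhat ≤ Finset.univ.sup M + ∑ k, τ k + 1 := by
    rw [hMhat]
    refine Finset.sup_le fun k _ => ?_
    have h7 : M k ≤ Finset.univ.sup M := Finset.le_sup (Finset.mem_univ k)
    have h8 : τ k ≤ ∑ k, τ k :=
      Finset.single_le_sum (fun _ _ => Nat.zero_le _) (Finset.mem_univ k)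
    omega
  exact Nat.cast_le.mpr (by omega)
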